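/- Let (xₙ) and (tₙ) be the integer sequences with x₀ = 1, t₀ = 1 and xₙ₊₁ = 3xₙ + 4tₙ, tₙ₊₁ = 2xₙ + 3tₙ. Then tₙ is a perfect square (i.e., tₙ = m² for some integer m) if and only if n = 0 or n = 3. -/

import Mathlib

/-!
The recursion preserves `xₙ ^ 2 + 1 = 2 * tₙ ^ 2`, so `tₙ = y ^ 2` gives `x ^ 2 + 1 = 2 * y ^ 4`.
Factoring in `ℤ[i]`, `x + i` or `x - i` is `±(1 + i) * δ ^ 4`, and `239 + i` has the same shape with
`1 - i` in place of `1 + i`. Hence a rational multiple of `(x ± i) * (239 + i)` is a fourth power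
`γ ^ 4`, and as `x` has size `y ^ 2`, the direction of the Gaussian integer `γ` is extremely close
to that of `u ^ (1 / 4)`, where `u = 239 + i`.

Let `P` be the degree-`r` numerator of the diagonal Padé approximant to the fourth root. Then
`8 ^ r * P(u, conj u)` is a Gaussian integer, so the imaginary part of `8 ^ r * γ * P(u, conj u)`
is zero or at least `1` in absolute value. Two consecutive `r` cannot both give zero. On the other
hand that imaginary part is tiny when `γ` is in the direction of `u ^ (1 / 4)`, because `u` is
close to the real axis. Balancing the two in `r` bounds `y` and therefore `n`, and the remaining
cases are checked by computation.
-/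

open Finset
open scoped Nat ComplexConjugate Real

section GeneralizedBinomial

variable {R : Type*} [CommRing R] [BinomialRing R]

lemma succ_mul_choose_succ (x : R) (n : ℕ) :
    (n + 1) * Ring.choose x (n + 1) = x * Ring.choose (x - 1) n := by
  simpa [nsmul_eq_mul] using Ring.choose_smul_choose x (Nat.le_add_left 1 n)

lemma sub_natCast_mul_choose (x : R) (n : ℕ) :
    (x - n) * Ring.choose x n = x * Ring.choose (x - 1) n := by
  rw [← succ_mul_choose_succ, mul_comm]
  simpa [nsmul_eq_mul] using (Ring.choose_smul_choose x n.le_succ).symm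

lemma factorial_mul_choose_eq_prod (x : R) (n : ℕ) :
    n ! * Ring.choose x n = ∏ i ∈ range n, (x - i) := by
  induction n with
  | zero => simp
  | succ n ih =>
    rw [prod_range_succ, ← ih, Nat.factorial_succ, Nat.cast_mul, Nat.cast_succ]
    linear_combination (n ! : R) * (succ_mul_choose_succ x n - sub_natCast_mul_choose x n)

lemma choose_nonneg {x : ℝ} {n : ℕ} (h : (n : ℝ) - 1 ≤ x) : 0 ≤ Ring.choose x n := by
  have hprod : 0 ≤ (n ! : ℝ) * Ring.choose x n := by
    rw [factorial_mul_choose_eq_prod]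
    refine prod_nonneg fun i hi => ?_
    have hin : (i : ℝ) + 1 ≤ n := mod_cast mem_range.mp hi
    linarith
  exact nonneg_of_mul_nonneg_right hprod (by positivity)

lemma dvd_prod_sub_mul_of_isCoprime {b q : ℤ} {k : ℕ} (hbq : IsCoprime b q) (hq : q ∣ k !)
    (a : ℤ) : q ∣ ∏ i ∈ range k, (a - b * i) := by
  obtain ⟨e, f, hef⟩ := hbq
  have hscale : ∏ i ∈ range k, e * (a - b * i) ≡ ∏ i ∈ range k, (e * a - i) [ZMOD q] :=
    Int.ModEq.prod fun i _ => Int.modEq_iff_dvd.mpr ⟨-f * i, by linear_combination (i : ℤ) * hef⟩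
  have hdvd : q ∣ ∏ i ∈ range k, e * (a - b * i) :=
    hscale.dvd_iff.mpr (hq.trans ⟨_, (factorial_mul_choose_eq_prod (e * a) k).symm⟩)
  have heq : IsCoprime q e := ⟨f, b, by linear_combination hef⟩
  rw [prod_mul_distrib, prod_const] at hdvd
  exact heq.pow_right.dvd_of_dvd_mul_left hdvd

lemma factorial_dvd_pow_mul_prod_sub_mul {b d : ℤ}
    (hbd : ∀ p : ℕ, p.Prime → (p : ℤ) ∣ b → (p : ℤ) ∣ d) (a : ℤ) (k : ℕ) :
    (k ! : ℤ) ∣ d ^ k * ∏ i ∈ range k, (a - b * i) := by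
  rw [Int.natCast_dvd, Nat.dvd_iff_prime_pow_dvd_dvd]
  intro p n hp hpn
  rw [← Int.natCast_dvd, Nat.cast_pow]
  by_cases hpb : (p : ℤ) ∣ b
  · refine Dvd.dvd.mul_right ((pow_dvd_pow_of_dvd (hbd p hp hpb) n).trans (pow_dvd_pow d ?_)) _
    have h := (le_emultiplicity_of_pow_dvd hpn).trans (hp.emultiplicity_factorial_le_div_pred k)
    exact (ENat.natCast_le_natCast.mp h).trans (Nat.div_le_self _ _)
  · have hcop : IsCoprime (p : ℤ) b := (Nat.prime_iff_prime_int.mp hp).coprime_iff_not_dvd.mpr hpb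
    exact (dvd_prod_sub_mul_of_isCoprime hcop.symm.pow_right (mod_cast hpn) a).mul_left _

lemma exists_intCast_eq_pow_mul_choose_div (K : Type*) [Field K] [CharZero K] {b d : ℤ}
    (hb : b ≠ 0) (hbd : ∀ p : ℕ, p.Prime → (p : ℤ) ∣ b → (p : ℤ) ∣ d) (a : ℤ) (k : ℕ) :
    ∃ c : ℤ, (b * d : K) ^ k * Ring.choose (a / b : K) k = c := by
  obtain ⟨c, hc⟩ := factorial_dvd_pow_mul_prod_sub_mul hbd a k
  refine ⟨c, mul_left_cancel₀ (Nat.cast_ne_zero.mpr k.factorial_ne_zero : (k ! : K) ≠ 0) ?_⟩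
  have hb' : (b : K) ≠ 0 := Int.cast_ne_zero.mpr hb
  calc (k ! : K) * ((b * d) ^ k * Ring.choose (a / b : K) k)
      = d ^ k * (b ^ k * ∏ i ∈ range k, (a / b - i : K)) := by
        rw [← factorial_mul_choose_eq_prod]; ring
    _ = d ^ k * ∏ i ∈ range k, (a - b * i : K) := by
        simpa [mul_sub, mul_div_cancel₀ _ hb'] using
          congrArg ((d : K) ^ k * ·) (pow_card_mul_prod (s := range k) (b := (b : K))
            (f := fun i : ℕ => (a / b - i : K)))
    _ = k ! * c := by exact_mod_cast hc

end GeneralizedBinomial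


section PadeForm

variable {R : Type*} [CommRing R] [BinomialRing R]

/-- The coefficient of `u ^ k * v ^ m` in the Padé form `padeForm α (k + m) u v`. -/
noncomputable def padeCoeff (α : R) (k m : ℕ) : R :=
  Ring.choose (k + m - α) k * Ring.choose (k + m + α) m

/-- The homogeneous numerator of degree `r` of the diagonal Padé approximant to `(v / u) ^ α` at
`u = v`; the denominator is `padeForm α r v u`, so `u ^ α * padeForm α r u v` and
`v ^ α * padeForm α r v u` agree to order `2 * r + 1` in `u - v`. -/
noncomputable def padeForm (α : R) (r : ℕ) (u v : R) : R :=
  ∑ p ∈ antidiagonal r, padeCoeff α p.1 p.2 * (u ^ p.1 * v ^ p.2)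

lemma padeCoeff_succ_left (α : R) (k m : ℕ) :
    (k + 1) * (k + 1 + α) * padeCoeff α (k + 1) m =
      ((k + m + 1) ^ 2 - α ^ 2) * padeCoeff α k m := by
  have hl := succ_mul_choose_succ (k + m + 1 - α) k
  have hr := sub_natCast_mul_choose (k + m + 1 + α) m
  rw [show (k + m + 1 - α - 1 : R) = k + m - α by ring] at hl
  rw [show (k + m + 1 + α - 1 : R) = k + m + α by ring] at hr
  simp only [padeCoeff, Nat.cast_add, Nat.cast_one, add_right_comm (k : R) 1]
  linear_combination ((k + m + 1 + α) - m) * Ring.choose (k + m + 1 + α) m * hl +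
    (k + m + 1 - α) * Ring.choose (k + m - α) k * hr

lemma padeCoeff_neg_swap (α : R) (k m : ℕ) : padeCoeff (-α) k m = padeCoeff α m k := by
  simp only [padeCoeff, sub_neg_eq_add, ← sub_eq_add_neg]
  rw [mul_comm, add_comm (k : R)]

lemma padeCoeff_succ_right (α : R) (k m : ℕ) :
    (m + 1) * (m + 1 - α) * padeCoeff α k (m + 1) =
      ((k + m + 1) ^ 2 - α ^ 2) * padeCoeff α k m := by
  have h := padeCoeff_succ_left (-α) m k
  rw [padeCoeff_neg_swap, padeCoeff_neg_swap, neg_sq, ← sub_eq_add_neg, add_comm (m : R) k] at h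
  exact h

lemma sum_padeCoeff_shift_left (α : R) (r : ℕ) (u v : R) (f : ℕ → ℕ → R) :
    ∑ p ∈ antidiagonal (r + 1),
        p.1 * (p.1 + α) * f p.1 p.2 * (padeCoeff α p.1 p.2 * (u ^ p.1 * v ^ p.2)) =
      ((r + 1) ^ 2 - α ^ 2) * u *
        ∑ p ∈ antidiagonal r, f (p.1 + 1) p.2 * (padeCoeff α p.1 p.2 * (u ^ p.1 * v ^ p.2)) := by
  rw [Finset.Nat.sum_antidiagonal_succ, mul_sum]
  simp only [Nat.cast_zero, zero_mul, zero_add]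
  refine sum_congr rfl fun p hp => ?_
  rw [← mem_antidiagonal.mp hp]
  push_cast
  linear_combination f (p.1 + 1) p.2 * u ^ (p.1 + 1) * v ^ p.2 * padeCoeff_succ_left α p.1 p.2

lemma sum_padeCoeff_shift_right (α : R) (r : ℕ) (u v : R) (f : ℕ → ℕ → R) :
    ∑ p ∈ antidiagonal (r + 1),
        p.2 * (p.2 - α) * f p.1 p.2 * (padeCoeff α p.1 p.2 * (u ^ p.1 * v ^ p.2)) =
      ((r + 1) ^ 2 - α ^ 2) * v *
        ∑ p ∈ antidiagonal r, f p.1 (p.2 + 1) * (padeCoeff α p.1 p.2 * (u ^ p.1 * v ^ p.2)) := by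
  rw [Finset.Nat.sum_antidiagonal_succ', mul_sum]
  simp only [Nat.cast_zero, zero_mul, zero_add]
  refine sum_congr rfl fun p hp => ?_
  rw [← mem_antidiagonal.mp hp]
  push_cast
  linear_combination f p.1 (p.2 + 1) * u ^ p.1 * v ^ (p.2 + 1) * padeCoeff_succ_right α p.1 p.2

lemma padeForm_recurrence [IsDomain R] {α : R} {n : ℕ} (hα : α ^ 2 ≠ (n + 2) ^ 2) (u v : R) :
    (n + 2) * (n + 1) * padeForm α (n + 2) u v =
      (2 * n + 3) * (n + 1) * (u + v) * padeForm α (n + 1) u v -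
        ((n + 1) ^ 2 - α ^ 2) * (u - v) ^ 2 * padeForm α n u v := by
  let S (f : ℕ → ℕ → R) : R :=
    ∑ p ∈ antidiagonal (n + 2), f p.1 p.2 * (padeCoeff α p.1 p.2 * (u ^ p.1 * v ^ p.2))
  have hl := sum_padeCoeff_shift_left α (n + 1) u v fun _ _ => 1
  have hr := sum_padeCoeff_shift_right α (n + 1) u v fun _ _ => 1
  have hll := sum_padeCoeff_shift_left α (n + 1) u v fun k _ => (k - 1) * (k - 1 + α)
  have hlr := sum_padeCoeff_shift_left α (n + 1) u v fun _ m => m * (m - α)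
  have hrr := sum_padeCoeff_shift_right α (n + 1) u v fun _ m => (m - 1) * (m - 1 - α)
  have hl' := sum_padeCoeff_shift_left α n u v fun _ _ => 1
  have hr' := sum_padeCoeff_shift_right α n u v fun _ _ => 1
  simp only [Nat.cast_add, Nat.cast_one, add_sub_cancel_right, one_mul, mul_one]
    at hl hr hll hlr hrr hl' hr'
  rw [hl'] at hll
  rw [hr'] at hlr hrr
  have key : (n + 2) * (n + 1) * ((n + 2) ^ 2 - α ^ 2) * padeForm α (n + 2) u v -
      (2 * n + 3) * (n + 1) * (S (fun k _ => k * (k + α)) + S (fun _ m => m * (m - α))) +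
      (S (fun k _ => k * (k + α) * ((k - 1) * (k - 1 + α))) -
        2 * S (fun k m => k * (k + α) * (m * (m - α))) +
        S (fun _ m => m * (m - α) * ((m - 1) * (m - 1 - α)))) = 0 := by
    simp only [S, padeForm, mul_sum, ← sum_add_distrib, ← sum_sub_distrib]
    refine sum_eq_zero fun p hp => ?_
    have hm : (p.2 : R) = n + 2 - p.1 := by
      have hsum := congrArg (Nat.cast (R := R)) (mem_antidiagonal.mp hp)
      push_cast at hsum
      linear_combination hsum
    rw [hm]
    ring
  simp only [S] at key
  rw [hl, hr, hll, hlr, hrr] at key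
  refine mul_left_cancel₀ (sub_ne_zero.mpr hα.symm) ?_
  simp only [padeForm] at key ⊢
  linear_combination key

lemma padeForm_zero (α u v : R) : padeForm α 0 u v = 1 := by
  simp [padeForm, padeCoeff]

lemma padeForm_one (α u v : R) : padeForm α 1 u v = (1 - α) * u + (1 + α) * v := by
  simp only [padeForm, padeCoeff, Finset.Nat.sum_antidiagonal_succ, Finset.Nat.antidiagonal_zero,
    sum_singleton, zero_add, Ring.choose_zero_right', Ring.choose_one_right', Nat.cast_zero,
    Nat.cast_one]
  ring

lemma padeForm_mul (α c : R) (r : ℕ) (u v : R) :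
    padeForm α r (c * u) (c * v) = c ^ r * padeForm α r u v := by
  rw [padeForm, padeForm, mul_sum]
  refine sum_congr rfl fun p hp => ?_
  rw [← mem_antidiagonal.mp hp, pow_add]
  ring

lemma sum_padeCoeff (α : R) (r : ℕ) :
    ∑ p ∈ antidiagonal r, padeCoeff α p.1 p.2 = r.centralBinom := by
  have h := Ring.add_choose_eq r (Commute.all (r - α) (r + α))
  rw [show (r : R) - α + (r + α) = (2 * r : ℕ) by push_cast; ring, Ring.choose_natCast] at h
  rw [Nat.centralBinom_eq_two_mul_choose, h]
  refine sum_congr rfl fun p hp => ?_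
  rw [← mem_antidiagonal.mp hp, padeCoeff, Nat.cast_add]

lemma exists_intCast_eq_pow_mul_padeCoeff (K : Type*) [Field K] [CharZero K] {b d : ℤ}
    (hb : b ≠ 0) (hbd : ∀ p : ℕ, p.Prime → (p : ℤ) ∣ b → (p : ℤ) ∣ d) (a : ℤ) (k m : ℕ) :
    ∃ c : ℤ, (b * d : K) ^ (k + m) * padeCoeff (a / b : K) k m = c := by
  have hb' : (b : K) ≠ 0 := Int.cast_ne_zero.mpr hb
  obtain ⟨c₁, hc₁⟩ := exists_intCast_eq_pow_mul_choose_div K hb hbd (b * (k + m) - a) k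
  obtain ⟨c₂, hc₂⟩ := exists_intCast_eq_pow_mul_choose_div K hb hbd (b * (k + m) + a) m
  push_cast at hc₁ hc₂
  rw [sub_div, mul_div_cancel_left₀ _ hb'] at hc₁
  rw [add_div, mul_div_cancel_left₀ _ hb'] at hc₂
  refine ⟨c₁ * c₂, ?_⟩
  rw [padeCoeff, Int.cast_mul, ← hc₁, ← hc₂]
  ring

lemma pow_mul_padeForm_mem {K : Type*} [Field K] [CharZero K] {b d : ℤ}
    (hb : b ≠ 0) (hbd : ∀ p : ℕ, p.Prime → (p : ℤ) ∣ b → (p : ℤ) ∣ d) (a : ℤ) (r : ℕ)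
    (S : Subring K) {u v : K} (hu : u ∈ S) (hv : v ∈ S) :
    (b * d : K) ^ r * padeForm (a / b : K) r u v ∈ S := by
  rw [padeForm, mul_sum]
  refine S.sum_mem fun p hp => ?_
  obtain ⟨c, hc⟩ := exists_intCast_eq_pow_mul_padeCoeff K hb hbd a p.1 p.2
  rw [← mul_assoc, ← mem_antidiagonal.mp hp, hc]
  exact S.mul_mem (intCast_mem S c) (S.mul_mem (S.pow_mem hu _) (S.pow_mem hv _))

end PadeForm

section ComplexPadeForm

lemma ofReal_padeCoeff (α : ℝ) (k m : ℕ) :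
    ((padeCoeff α k m : ℝ) : ℂ) = padeCoeff (α : ℂ) k m := by
  have hmap (x : ℝ) (n : ℕ) : ((Ring.choose x n : ℝ) : ℂ) = Ring.choose (x : ℂ) n :=
    Ring.map_choose Complex.ofRealHom x n
  simp only [padeCoeff, Complex.ofReal_mul, hmap]
  push_cast
  rfl

lemma padeCoeff_nonneg {α : ℝ} (hα : |α| ≤ 1) (k m : ℕ) : 0 ≤ padeCoeff α k m := by
  obtain ⟨hneg, hpos⟩ := abs_le.mp hα
  exact mul_nonneg (choose_nonneg (by linarith [m.cast_nonneg (α := ℝ)]))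
    (choose_nonneg (by linarith [k.cast_nonneg (α := ℝ)]))

lemma norm_padeForm_le {α : ℝ} (hα : |α| ≤ 1) (r : ℕ) {u v : ℂ} {ρ : ℝ} (hu : ‖u‖ ≤ ρ)
    (hv : ‖v‖ ≤ ρ) : ‖padeForm (α : ℂ) r u v‖ ≤ (4 * ρ) ^ r := by
  have hρ : 0 ≤ ρ := (norm_nonneg u).trans hu
  have hterm : ∀ p ∈ antidiagonal r,
      ‖padeCoeff (α : ℂ) p.1 p.2 * (u ^ p.1 * v ^ p.2)‖ ≤ padeCoeff α p.1 p.2 * ρ ^ r := by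
    intro p hp
    have hcoeff := padeCoeff_nonneg hα p.1 p.2
    rw [← ofReal_padeCoeff, norm_mul, Complex.norm_of_nonneg hcoeff, norm_mul, norm_pow, norm_pow,
      ← mem_antidiagonal.mp hp, pow_add]
    gcongr
  calc ‖padeForm (α : ℂ) r u v‖
      ≤ ∑ p ∈ antidiagonal r, padeCoeff α p.1 p.2 * ρ ^ r := norm_sum_le_of_le _ hterm
    _ = r.centralBinom * ρ ^ r := by rw [← sum_mul, sum_padeCoeff]
    _ ≤ 2 ^ (2 * r) * ρ ^ r := by
        gcongr
        exact_mod_cast Nat.choose_le_two_pow (2 * r) r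
    _ = (4 * ρ) ^ r := by rw [pow_mul, mul_pow]; norm_num

lemma im_mul_padeForm_recurrence {α : ℝ} {n : ℕ} (hα : α ^ 2 ≠ (n + 2) ^ 2) (γ u : ℂ) :
    (n + 2) * (n + 1) * (γ * padeForm (α : ℂ) (n + 2) u (conj u)).im =
      (2 * n + 3) * (n + 1) * (2 * u.re) * (γ * padeForm (α : ℂ) (n + 1) u (conj u)).im +
        ((n + 1) ^ 2 - α ^ 2) * (4 * u.im ^ 2) * (γ * padeForm (α : ℂ) n u (conj u)).im := by
  have hrec := padeForm_recurrence (α := (α : ℂ)) (n := n) (mod_cast hα) u (conj u)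
  have hsub : (u - conj u) ^ 2 = ((-(4 * u.im ^ 2) : ℝ) : ℂ) := by
    rw [Complex.sub_conj, mul_pow, Complex.I_sq]
    push_cast
    ring
  rw [Complex.add_conj, hsub] at hrec
  set P := padeForm (α : ℂ)
  have hγ : ((((n + 2) * (n + 1) : ℝ)) : ℂ) * (γ * P (n + 2) u (conj u)) =
      (((2 * n + 3) * (n + 1) * (2 * u.re) : ℝ) : ℂ) * (γ * P (n + 1) u (conj u)) +
        ((((n + 1) ^ 2 - α ^ 2) * (4 * u.im ^ 2) : ℝ) : ℂ) * (γ * P n u (conj u)) := by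
    push_cast at hrec ⊢
    linear_combination γ * hrec
  have him := congrArg Complex.im hγ
  rwa [Complex.add_im, Complex.im_ofReal_mul, Complex.im_ofReal_mul, Complex.im_ofReal_mul] at him

lemma im_mul_padeForm_one (α : ℝ) (γ u : ℂ) :
    (γ * padeForm (α : ℂ) 1 u (conj u)).im = 2 * (γ.im * u.re - α * u.im * γ.re) := by
  simp only [padeForm_one, Complex.mul_im, Complex.add_re, Complex.add_im, Complex.mul_re,
    Complex.sub_re, Complex.sub_im, Complex.one_re, Complex.one_im, Complex.ofReal_re,
    Complex.ofReal_im, Complex.conj_re, Complex.conj_im]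
  ring

lemma im_mul_padeForm_ne_zero_or {α : ℝ} (hα : ∀ k : ℕ, α ^ 2 ≠ k ^ 2) {γ u : ℂ} (hγ : γ ≠ 0)
    (hu : u.im ≠ 0) (n : ℕ) :
    (γ * padeForm (α : ℂ) n u (conj u)).im ≠ 0 ∨
      (γ * padeForm (α : ℂ) (n + 1) u (conj u)).im ≠ 0 := by
  induction n with
  | zero =>
    by_contra! h
    rw [padeForm_zero, zero_add, im_mul_padeForm_one, mul_one] at h
    obtain ⟨him, hlin⟩ := h
    have hα₀ : α ≠ 0 := by simpa using hα 0
    have hre : γ.re = 0 := by simpa [him, hα₀, hu] using hlin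
    exact hγ (Complex.ext hre him)
  | succ n ih =>
    by_contra! h
    have hrec := im_mul_padeForm_recurrence (n := n) (mod_cast hα (n + 2)) γ u
    rw [h.1, h.2, mul_zero, mul_zero, zero_add, zero_eq_mul] at hrec
    have hκ : ((n + 1 : ℝ) ^ 2 - α ^ 2) ≠ 0 := sub_ne_zero.mpr (mod_cast (hα (n + 1)).symm)
    exact ih.elim (fun h₀ => h₀ (hrec.resolve_left (by positivity))) (fun h₁ => h₁ h.1)

end ComplexPadeForm

section PadeRemainder

/-- The integral to which the imaginary part of `u ^ α * padeForm α r u (conj u)` is proportional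
for `u = exp (θ * I)`: up to a factor it is the error of the Padé approximation to `u ^ (2 * α)` on
the unit circle. -/
noncomputable def padeRemainder (α θ : ℝ) (r : ℕ) : ℝ :=
  ∫ s in -θ..θ, (2 * Real.cos s - 2 * Real.cos θ) ^ r * Real.cos (α * s)

lemma intervalIntegrable_const_mul_padeRemainder (α θ c : ℝ) (r : ℕ) :
    IntervalIntegrable
      (fun s => c * ((2 * Real.cos s - 2 * Real.cos θ) ^ r * Real.cos (α * s)))
      MeasureTheory.volume (-θ) θ :=
  Continuous.intervalIntegrable (by fun_prop) _ _

lemma hasDerivAt_cos_const_mul (α s : ℝ) :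
    HasDerivAt (fun s => Real.cos (α * s)) (-Real.sin (α * s) * α) s := by
  simpa using ((hasDerivAt_id s).const_mul α).cos

lemma hasDerivAt_sin_const_mul (α s : ℝ) :
    HasDerivAt (fun s => Real.sin (α * s)) (Real.cos (α * s) * α) s := by
  simpa using ((hasDerivAt_id s).const_mul α).sin

-- For `m = 0` the truncated exponent `m - 1` is multiplied by `m`.
lemma hasDerivAt_padeRemainder_primitive (α θ : ℝ) (m : ℕ) (s : ℝ) :
    HasDerivAt
      (fun s => -((m + 1) * (2 * Real.cos s - 2 * Real.cos θ) ^ m * (2 * Real.sin s) *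
          Real.cos (α * s)) +
        (2 * Real.cos s - 2 * Real.cos θ) ^ (m + 1) * (α * Real.sin (α * s)))
      ((m + 1) * m * (4 * Real.sin θ ^ 2) *
          ((2 * Real.cos s - 2 * Real.cos θ) ^ (m - 1) * Real.cos (α * s)) -
        (m + 1) * (2 * m + 1) * (2 * Real.cos θ) *
          ((2 * Real.cos s - 2 * Real.cos θ) ^ m * Real.cos (α * s)) -
        ((m + 1) ^ 2 - α ^ 2) *
          ((2 * Real.cos s - 2 * Real.cos θ) ^ (m + 1) * Real.cos (α * s))) s := by
  have hg : HasDerivAt (fun s => 2 * Real.cos s - 2 * Real.cos θ) (2 * -Real.sin s) s :=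
    ((Real.hasDerivAt_cos s).const_mul 2).sub_const _
  have hder := (((((hg.pow m).const_mul (m + 1 : ℝ)).mul
    ((Real.hasDerivAt_sin s).const_mul 2)).mul (hasDerivAt_cos_const_mul α s)).neg).add
      ((hg.pow (m + 1)).mul ((hasDerivAt_sin_const_mul α s).const_mul α))
  refine hder.congr_deriv ?_
  simp only [Pi.pow_apply, Pi.mul_apply, Nat.add_sub_cancel, Real.sin_sq θ]
  have hsin := Real.sin_sq s
  rcases m with _ | m
  · simp only [Nat.cast_zero, zero_add, pow_zero, pow_one, mul_zero, zero_mul]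
    ring
  · simp only [Nat.add_sub_cancel, pow_succ (_ - _)]
    push_cast
    linear_combination (4 * ((m : ℝ) + 1 + 1) * (m + 1) *
      (2 * Real.cos s - 2 * Real.cos θ) ^ m * Real.cos (α * s)) * hsin

lemma padeRemainder_succ (α θ : ℝ) (m : ℕ) :
    ((m + 1) ^ 2 - α ^ 2) * padeRemainder α θ (m + 1) =
      (m + 1) * m * (4 * Real.sin θ ^ 2) * padeRemainder α θ (m - 1) -
        (m + 1) * (2 * m + 1) * (2 * Real.cos θ) * padeRemainder α θ m +
        4 * (m + 1) * 0 ^ m * Real.sin θ * Real.cos (α * θ) := by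
  have hint := intervalIntegrable_const_mul_padeRemainder α θ
  have hftc := intervalIntegral.integral_eq_sub_of_hasDerivAt (a := -θ) (b := θ)
    (fun s _ => hasDerivAt_padeRemainder_primitive α θ m s)
    (Continuous.intervalIntegrable (by fun_prop) _ _)
  rw [intervalIntegral.integral_sub ((hint _ _).sub (hint _ _)) (hint _ _),
    intervalIntegral.integral_sub (hint _ _) (hint _ _), intervalIntegral.integral_const_mul,
    intervalIntegral.integral_const_mul, intervalIntegral.integral_const_mul] at hftc
  simp only [Real.cos_neg, Real.sin_neg, mul_neg, sub_self, zero_pow m.succ_ne_zero] at hftc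
  simp only [padeRemainder]
  linear_combination -hftc

lemma padeRemainder_zero (α θ : ℝ) : α * padeRemainder α θ 0 = 2 * Real.sin (α * θ) := by
  have hftc := intervalIntegral.integral_eq_sub_of_hasDerivAt (a := -θ) (b := θ)
    (fun s _ => hasDerivAt_sin_const_mul α s) (Continuous.intervalIntegrable (by fun_prop) _ _)
  rw [intervalIntegral.integral_mul_const, mul_neg, Real.sin_neg] at hftc
  simp only [padeRemainder, pow_zero, one_mul]
  linear_combination hftc

lemma abs_padeRemainder_le (α : ℝ) {θ : ℝ} (hθ₀ : 0 ≤ θ) (hθπ : θ ≤ π) (r : ℕ) :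
    |padeRemainder α θ r| ≤ (2 - 2 * Real.cos θ) ^ r * (2 * θ) := by
  have hbound : ∀ s ∈ Set.uIoc (-θ) θ,
      ‖(2 * Real.cos s - 2 * Real.cos θ) ^ r * Real.cos (α * s)‖ ≤ (2 - 2 * Real.cos θ) ^ r := by
    intro s hs
    rw [Set.uIoc_of_le (by linarith)] at hs
    have hcos : Real.cos θ ≤ Real.cos s := by
      rw [← Real.cos_abs s]
      exact Real.cos_le_cos_of_nonneg_of_le_pi (abs_nonneg s) hθπ (abs_le.mpr ⟨hs.1.le, hs.2⟩)
    have hbase : 0 ≤ 2 * Real.cos s - 2 * Real.cos θ := by linarith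
    rw [norm_mul, norm_pow, Real.norm_of_nonneg hbase]
    refine (mul_le_of_le_one_right (pow_nonneg hbase r) (Real.abs_cos_le_one _)).trans ?_
    gcongr
    linarith [Real.cos_le_one s]
  have h := intervalIntegral.norm_integral_le_of_norm_le_const hbound
  rwa [sub_neg_eq_add, ← two_mul, abs_of_nonneg (by positivity : 0 ≤ 2 * θ)] at h

end PadeRemainder

section PadeApproximation

lemma prod_mul_padeRemainder {α : ℝ} (hα : ∀ k : ℕ, α ^ 2 ≠ k ^ 2) (θ : ℝ) (r : ℕ) :
    α * (∏ j ∈ range r, ((j + 1) ^ 2 - α ^ 2)) * padeRemainder α θ r =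
      2 * (-1) ^ r * r ! ^ 2 *
        (Complex.exp (α * θ * Complex.I) * padeForm (α : ℂ) r (Complex.exp (θ * Complex.I))
          (conj (Complex.exp (θ * Complex.I)))).im := by
  have hrot (x : ℝ) : (Complex.exp (x * Complex.I)).re = Real.cos x ∧
      (Complex.exp (x * Complex.I)).im = Real.sin x :=
    ⟨Complex.exp_ofReal_mul_I_re x, Complex.exp_ofReal_mul_I_im x⟩
  rw [← Complex.ofReal_mul]
  obtain ⟨hγre, hγim⟩ := hrot (α * θ)
  obtain ⟨hure, huim⟩ := hrot θ
  set γ := Complex.exp ((α * θ : ℝ) * Complex.I)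
  set u := Complex.exp (θ * Complex.I)
  induction r using Nat.twoStepInduction with
  | zero => simp [padeForm_zero, padeRemainder_zero, hγim]
  | one =>
    have hE₁ := padeRemainder_succ α θ 0
    rw [im_mul_padeForm_one, hγim, hγre, hure, huim]
    simp only [Nat.cast_zero, zero_add, pow_zero] at hE₁
    simp only [range_one, prod_singleton, Nat.cast_zero, Nat.cast_one, zero_add, one_pow, pow_one,
      Nat.factorial_one]
    linear_combination α * hE₁ - 2 * Real.cos θ * padeRemainder_zero α θ
  | more n ih₀ ih₁ =>
    have hE := padeRemainder_succ α θ (n + 1)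
    have hP := im_mul_padeForm_recurrence (n := n) (mod_cast hα (n + 2)) γ u
    rw [hure, huim] at hP
    rw [Nat.factorial_succ (n + 1), Nat.factorial_succ n, prod_range_succ _ (n + 1)]
    rw [Nat.factorial_succ n] at ih₁
    rw [prod_range_succ] at ih₁ ⊢
    simp only [Nat.add_sub_cancel, zero_pow n.succ_ne_zero] at hE
    push_cast at *
    linear_combination α * (∏ j ∈ range n, ((j + 1 : ℝ) ^ 2 - α ^ 2)) * ((n + 1) ^ 2 - α ^ 2) * hE
      + (n + 2) * (n + 1) * 4 * Real.sin θ ^ 2 * ((n + 1) ^ 2 - α ^ 2) * ih₀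
      - (n + 2) * (2 * n + 3) * 2 * Real.cos θ * ih₁
      - 2 * (-1) ^ n * (n ! : ℝ) ^ 2 * (n + 2) * (n + 1) * hP

lemma prod_succ_sq_sub_le {x : ℝ} (hx₀ : 0 ≤ x) (hx₁ : x ≤ 1) (r : ℕ) :
    0 ≤ ∏ j ∈ range r, ((j + 1 : ℝ) ^ 2 - x) ∧ ∏ j ∈ range r, ((j + 1 : ℝ) ^ 2 - x) ≤ r ! ^ 2 := by
  have hnonneg (j : ℕ) : 0 ≤ (j + 1 : ℝ) ^ 2 - x := by nlinarith [j.cast_nonneg (α := ℝ)]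
  refine ⟨prod_nonneg fun j _ => hnonneg j, ?_⟩
  rw [← prod_range_add_one_eq_factorial, Nat.cast_prod, ← prod_pow]
  refine prod_le_prod (fun j _ => hnonneg j) fun j _ => ?_
  push_cast
  linarith

lemma sq_ne_natCast_sq_of_pos_of_lt_one {α : ℝ} (hα₀ : 0 < α) (hα₁ : α < 1) (k : ℕ) :
    α ^ 2 ≠ k ^ 2 := by
  rw [Ne, sq_eq_sq₀ hα₀.le k.cast_nonneg]
  rintro rfl
  norm_cast at hα₀ hα₁
  omega

lemma abs_im_exp_mul_padeForm_exp_le {α θ : ℝ} (hα₀ : 0 < α) (hα₁ : α < 1) (hθ₀ : 0 ≤ θ)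
    (hθπ : θ ≤ π) (r : ℕ) :
    |(Complex.exp (α * θ * Complex.I) * padeForm (α : ℂ) r (Complex.exp (θ * Complex.I))
        (conj (Complex.exp (θ * Complex.I)))).im| ≤ α * θ * (2 - 2 * Real.cos θ) ^ r := by
  have hid := congrArg abs
    (prod_mul_padeRemainder (sq_ne_natCast_sq_of_pos_of_lt_one hα₀ hα₁) θ r)
  obtain ⟨hprod₀, hprod⟩ := prod_succ_sq_sub_le (sq_nonneg α) (by nlinarith : α ^ 2 ≤ 1) r
  simp only [abs_mul, abs_pow, abs_neg, abs_one, one_pow, abs_two, mul_one, Nat.abs_cast,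
    abs_of_pos hα₀, abs_of_nonneg hprod₀] at hid
  have hr : 0 < 2 * (r ! : ℝ) ^ 2 := by positivity
  refine le_of_mul_le_mul_left ?_ hr
  rw [← hid]
  calc α * (∏ j ∈ range r, ((j + 1) ^ 2 - α ^ 2)) * |padeRemainder α θ r|
      ≤ α * r ! ^ 2 * ((2 - 2 * Real.cos θ) ^ r * (2 * θ)) := by
        gcongr
        exact abs_padeRemainder_le α hθ₀ hθπ r
    _ = 2 * r ! ^ 2 * (α * θ * (2 - 2 * Real.cos θ) ^ r) := by ring

lemma abs_im_exp_arg_mul_padeForm_le {α : ℝ} (hα₀ : 0 < α) (hα₁ : α < 1) {u : ℂ} (hu : 0 ≤ u.im)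
    (r : ℕ) :
    |(Complex.exp (α * u.arg * Complex.I) * padeForm (α : ℂ) r u (conj u)).im| ≤
      α * u.arg * (2 * (‖u‖ - u.re)) ^ r := by
  have hhom : padeForm (α : ℂ) r u (conj u) = ((‖u‖ ^ r : ℝ) : ℂ) * padeForm (α : ℂ) r
      (Complex.exp (u.arg * Complex.I)) (conj (Complex.exp (u.arg * Complex.I))) := by
    rw [Complex.ofReal_pow, ← padeForm_mul, ← Complex.conj_ofReal ‖u‖, ← map_mul,
      Complex.conj_ofReal, Complex.norm_mul_exp_arg_mul_I]
  rw [hhom, mul_left_comm, Complex.im_ofReal_mul, abs_mul, abs_of_nonneg (by positivity)]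
  calc ‖u‖ ^ r * _
      ≤ ‖u‖ ^ r * (α * u.arg * (2 - 2 * Real.cos u.arg) ^ r) := by
        gcongr
        exact abs_im_exp_mul_padeForm_exp_le hα₀ hα₁ (Complex.arg_nonneg_iff.mpr hu)
          (Complex.arg_le_pi u) r
    _ = α * u.arg * (2 * (‖u‖ - ‖u‖ * Real.cos u.arg)) ^ r := by
        rw [mul_left_comm, ← mul_pow]; ring
    _ = α * u.arg * (2 * (‖u‖ - u.re)) ^ r := by rw [Complex.norm_mul_cos_arg]

end PadeApproximation

section Gap

lemma one_le_pow_mul_abs_im_mul_padeForm {a b d : ℤ} (hb : 0 < b) (hd : 0 < d)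
    (hbd : ∀ p : ℕ, p.Prime → (p : ℤ) ∣ b → (p : ℤ) ∣ d) {γ u : GaussianInt} {r : ℕ}
    (h : ((γ : ℂ) * padeForm ((a / b : ℝ) : ℂ) r u (conj (u : ℂ))).im ≠ 0) :
    1 ≤ (b * d : ℝ) ^ r * |((γ : ℂ) * padeForm ((a / b : ℝ) : ℂ) r u (conj (u : ℂ))).im| := by
  have hmem : (γ : ℂ) * ((b * d : ℂ) ^ r * padeForm (a / b : ℂ) r u (conj (u : ℂ))) ∈
      GaussianInt.toComplex.range :=
    mul_mem ⟨γ, rfl⟩ <|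
      pow_mul_padeForm_mem hb.ne' hbd a r _ ⟨u, rfl⟩ ⟨star u, GaussianInt.toComplex_star u⟩
  obtain ⟨w, hw⟩ := hmem
  have him : (w.im : ℝ) =
      (b * d : ℝ) ^ r * ((γ : ℂ) * padeForm ((a / b : ℝ) : ℂ) r u (conj (u : ℂ))).im := by
    rw [← Complex.im_ofReal_mul, mul_left_comm, GaussianInt.intCast_im, hw]
    push_cast
    rfl
  have hscale : 0 < (b * d : ℝ) ^ r := by positivity
  have hw₀ : w.im ≠ 0 := fun hw₀ => mul_ne_zero hscale.ne' h (by rw [← him, hw₀, Int.cast_zero])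
  rw [← abs_of_pos hscale, ← abs_mul, ← him]
  exact_mod_cast Int.one_le_abs hw₀

lemma one_le_norm_mul_pow_add_norm_sub_mul_pow {a b d : ℤ} (ha : 0 < a) (hab : a < b) (hd : 0 < d)
    (hbd : ∀ p : ℕ, p.Prime → (p : ℤ) ∣ b → (p : ℤ) ∣ d) {γ u : GaussianInt} (hu : 0 ≤ u.im)
    {r : ℕ} (h : ((γ : ℂ) * padeForm ((a / b : ℝ) : ℂ) r u (conj (u : ℂ))).im ≠ 0) :
    1 ≤ ‖(γ : ℂ)‖ * (a / b * (u : ℂ).arg) * (2 * b * d * (‖(u : ℂ)‖ - u.re)) ^ r +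
      ‖(γ : ℂ) - ‖(γ : ℂ)‖ * Complex.exp ((a / b : ℝ) * (u : ℂ).arg * Complex.I)‖ *
        (4 * b * d * ‖(u : ℂ)‖) ^ r := by
  have hb : 0 < b := ha.trans hab
  have hα₀ : (0 : ℝ) < a / b := by positivity
  have hα₁ : (a / b : ℝ) < 1 := (div_lt_one (by positivity)).mpr (mod_cast hab)
  have hgap := one_le_pow_mul_abs_im_mul_padeForm hb hd hbd h
  have hdir := abs_im_exp_arg_mul_padeForm_le hα₀ hα₁
    (by rw [← GaussianInt.intCast_im]; exact_mod_cast hu : 0 ≤ (u : ℂ).im) r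
  have hsize := norm_padeForm_le (α := a / b) (by rw [abs_of_pos hα₀]; exact hα₁.le) r
    le_rfl (Complex.norm_conj (u : ℂ)).le
  set P := padeForm ((a / b : ℝ) : ℂ) r u (conj (u : ℂ))
  set e := Complex.exp ((a / b : ℝ) * (u : ℂ).arg * Complex.I)
  rw [← GaussianInt.intCast_re] at hdir
  have hsplit : ((γ : ℂ) * P).im =
      ‖(γ : ℂ)‖ * (e * P).im + (((γ : ℂ) - ‖(γ : ℂ)‖ * e) * P).im := by
    rw [← Complex.im_ofReal_mul, ← Complex.add_im]
    congr 1
    ring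
  have herr : |(((γ : ℂ) - ‖(γ : ℂ)‖ * e) * P).im| ≤
      ‖(γ : ℂ) - ‖(γ : ℂ)‖ * e‖ * (4 * ‖(u : ℂ)‖) ^ r :=
    calc _ ≤ ‖((γ : ℂ) - ‖(γ : ℂ)‖ * e) * P‖ := Complex.abs_im_le_norm _
      _ ≤ _ := by rw [norm_mul]; gcongr
  calc (1 : ℝ) ≤ (b * d : ℝ) ^ r * |((γ : ℂ) * P).im| := hgap
    _ ≤ (b * d : ℝ) ^ r * (‖(γ : ℂ)‖ * (a / b * (u : ℂ).arg * (2 * (‖(u : ℂ)‖ - u.re)) ^ r) +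
          ‖(γ : ℂ) - ‖(γ : ℂ)‖ * e‖ * (4 * ‖(u : ℂ)‖) ^ r) := by
        rw [hsplit]
        gcongr
        refine (abs_add_le _ _).trans (add_le_add ?_ herr)
        rw [abs_mul, abs_norm]
        gcongr
    _ = _ := by
        simp only [mul_pow]
        ring

end Gap

section FourthRoot

lemma abs_arg_le_abs_im_div_re {z : ℂ} (hz : 0 < z.re) : |z.arg| ≤ |z.im| / z.re := by
  have harg : |z.arg| < π / 2 := Complex.abs_arg_lt_pi_div_two_iff.mpr (.inl hz)
  calc |z.arg| ≤ Real.tan |z.arg| := Real.le_tan (abs_nonneg _) harg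
    _ ≤ |Real.tan z.arg| := by
        rcases abs_choice z.arg with h | h <;> rw [h]
        · exact le_abs_self _
        · exact (Real.tan_neg _).trans_le (neg_le_abs _)
    _ = |z.im| / z.re := by rw [Complex.tan_arg, abs_div, abs_of_pos hz]

lemma exists_toComplex_eq_of_pow_four_eq {z : GaussianInt} {w : ℂ} (h : w ^ 4 = (z : ℂ) ^ 4) :
    ∃ γ : GaussianInt, (γ : ℂ) = w := by
  have hfactor : (w - z) * (w + z) * ((w - Complex.I * z) * (w + Complex.I * z)) = 0 := by
    linear_combination h - (w ^ 2 - (z : ℂ) ^ 2) * (z : ℂ) ^ 2 * Complex.I_sq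
  have hI : ((⟨0, 1⟩ : GaussianInt) : ℂ) = Complex.I := by simp [GaussianInt.toComplex_def']
  rcases mul_eq_zero.mp hfactor with h | h <;> rcases mul_eq_zero.mp h with h | h
  · exact ⟨z, by linear_combination -h⟩
  · exact ⟨-z, by rw [GaussianInt.toComplex_neg]; linear_combination -h⟩
  · exact ⟨⟨0, 1⟩ * z, by rw [GaussianInt.toComplex_mul, hI]; linear_combination -h⟩
  · exact ⟨-(⟨0, 1⟩ * z), by
      rw [GaussianInt.toComplex_neg, GaussianInt.toComplex_mul, hI]; linear_combination -h⟩

lemma exists_norm_sub_le_of_pow_four_eq {z : GaussianInt} {p q : ℂ} {c : ℝ} (hc : 0 ≤ c)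
    (hz : (z : ℂ) ^ 4 = c * (p * q)) :
    ∃ γ : GaussianInt, ‖(γ : ℂ)‖ = ‖(z : ℂ)‖ ∧
      ‖(γ : ℂ) - ‖(γ : ℂ)‖ * Complex.exp (q.arg / 4 * Complex.I)‖ ≤
        ‖(γ : ℂ)‖ * (|p.arg| / 4) := by
  have hnorm : ‖(z : ℂ)‖ ^ 4 = c * (‖p‖ * ‖q‖) := by
    rw [← norm_pow, hz, norm_mul, norm_mul, Complex.norm_of_nonneg hc]
  have hquarter (x : ℝ) : Complex.exp (x / 4 * Complex.I) ^ 4 = Complex.exp (x * Complex.I) := by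
    rw [← Complex.exp_nat_mul]
    congr 1
    push_cast
    ring
  obtain ⟨γ, hγ⟩ : ∃ γ : GaussianInt, (γ : ℂ) =
      ‖(z : ℂ)‖ * (Complex.exp (p.arg / 4 * Complex.I) * Complex.exp (q.arg / 4 * Complex.I)) := by
    refine exists_toComplex_eq_of_pow_four_eq (z := z) ?_
    rw [mul_pow, mul_pow, hquarter, hquarter, ← Complex.ofReal_pow, hnorm, hz]
    push_cast
    linear_combination
      c * (‖q‖ * Complex.exp (q.arg * Complex.I)) * Complex.norm_mul_exp_arg_mul_I p +
        c * p * Complex.norm_mul_exp_arg_mul_I q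
  have hunit (x : ℝ) : ‖Complex.exp (x / 4 * Complex.I)‖ = 1 := by
    exact_mod_cast Complex.norm_exp_ofReal_mul_I (x / 4)
  have hγz : ‖(γ : ℂ)‖ = ‖(z : ℂ)‖ := by
    rw [hγ, norm_mul, norm_mul, hunit, hunit, mul_one, mul_one, Complex.norm_real, norm_norm]
  refine ⟨γ, hγz, ?_⟩
  have hrot : ‖Complex.exp (p.arg / 4 * Complex.I) - 1‖ ≤ |p.arg| / 4 := by
    have h := Real.norm_exp_I_mul_ofReal_sub_one_le (x := p.arg / 4)
    rw [mul_comm, Complex.ofReal_div, Real.norm_eq_abs, abs_div] at h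
    simpa using h
  calc _ = ‖‖(z : ℂ)‖ * Complex.exp (q.arg / 4 * Complex.I) *
        (Complex.exp (p.arg / 4 * Complex.I) - 1)‖ := by
        rw [hγz, hγ]
        congr 1
        ring
    _ = ‖(γ : ℂ)‖ * ‖Complex.exp (p.arg / 4 * Complex.I) - 1‖ := by
        rw [norm_mul, norm_mul, hunit, mul_one, Complex.norm_real, norm_norm, hγz]
    _ ≤ _ := by gcongr

end FourthRoot

section GaussianInt

lemma eq_one_or_neg_one_or_I_or_neg_I_of_isUnit {u : GaussianInt} (hu : IsUnit u) :
    (u = 1 ∨ u = -1) ∨ (u = ⟨0, 1⟩ ∨ u = ⟨0, -1⟩) := by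
  have hnorm : u.re ^ 2 + u.im ^ 2 = 1 := by
    linear_combination (Zsqrtd.norm_def u).symm.trans
      ((Zsqrtd.norm_eq_one_iff' (by norm_num) u).mpr hu)
  simp only [Zsqrtd.ext_iff, Zsqrtd.re_one, Zsqrtd.im_one, Zsqrtd.re_neg, Zsqrtd.im_neg]
  have hre : u.re ^ 2 ≤ 1 := by nlinarith
  have him : u.im ^ 2 ≤ 1 := by nlinarith
  rw [sq_le_one_iff_abs_le_one, abs_le] at hre him
  obtain ⟨hre₀, hre₁⟩ := hre
  obtain ⟨him₀, him₁⟩ := him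
  interval_cases hre : u.re <;> interval_cases him : u.im <;> simp_all

lemma isCoprime_star_self_of_re_add_im_eq_one {w : GaussianInt} (hw : w.re + w.im = 1) :
    IsCoprime w (star w) := by
  obtain ⟨a, b⟩ := w
  obtain rfl : a = 1 - b := by simpa [eq_sub_iff_add_eq] using hw
  refine ⟨⟨1 - b - (b ^ 2 - b), b ^ 2 - 2 * b⟩, ⟨-(b ^ 2 - b), -(b ^ 2 - b)⟩, ?_⟩
  ext <;> simp only [Zsqrtd.star_mk, Zsqrtd.re_add, Zsqrtd.im_add, Zsqrtd.re_mul, Zsqrtd.im_mul,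
    Zsqrtd.re_one, Zsqrtd.im_one] <;> ring

lemma exists_eq_unit_mul_pow_four_of_sq_add_one_eq {x y : ℤ} (h : x ^ 2 + 1 = 2 * y ^ 4) :
    ∃ u δ : GaussianInt, IsUnit u ∧ δ.norm = |y| ∧ (⟨x, 1⟩ : GaussianInt) = ⟨1, 1⟩ * u * δ ^ 4 := by
  obtain ⟨c, rfl⟩ : Odd x := by
    by_contra hx
    rw [Int.not_odd_iff_even] at hx
    obtain ⟨c, rfl⟩ := hx
    ring_nf at h
    omega
  set w : GaussianInt := ⟨c + 1, -c⟩ with hw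
  have hwnorm : w.norm = y ^ 4 := by
    rw [hw, Zsqrtd.norm_def]
    linarith
  have hwstar : w * star w = (y : GaussianInt) ^ 4 := by
    rw [← Zsqrtd.norm_eq_mul_conj, hwnorm, Int.cast_pow]
  obtain ⟨δ, u, hu⟩ :=
    exists_associated_pow_of_mul_eq_pow'
      (isCoprime_star_self_of_re_add_im_eq_one (by simp [hw])) hwstar
  refine ⟨u, δ, u.isUnit, ?_, ?_⟩
  · have hnorm : w.norm = δ.norm ^ 4 := by
      rw [← hu, Zsqrtd.norm_mul, (Zsqrtd.norm_eq_one_iff' (by norm_num) _).mpr u.isUnit, mul_one]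
      exact map_pow Zsqrtd.normMonoidHom δ 4
    have hpow : δ.norm ^ 4 = |y| ^ 4 := by
      rw [← hnorm, (by decide : Even 4).pow_abs, hwnorm]
    exact (pow_left_inj₀ (GaussianInt.norm_nonneg δ) (abs_nonneg y) four_ne_zero).mp hpow
  · rw [mul_assoc, mul_comm (u : GaussianInt), hu]
    ext <;> simp only [hw, Zsqrtd.re_mul, Zsqrtd.im_mul] <;> ring

lemma exists_eq_or_eq_neg_mul_pow_four_of_sq_add_one_eq {x y : ℤ} (h : x ^ 2 + 1 = 2 * y ^ 4) :
    ∃ (s : ℤ) (δ : GaussianInt), |s| = 1 ∧ δ.norm = |y| ∧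
      ((⟨x, s⟩ : GaussianInt) = ⟨1, 1⟩ * δ ^ 4 ∨ (⟨x, s⟩ : GaussianInt) = -(⟨1, 1⟩ * δ ^ 4)) := by
  obtain ⟨u, δ, hu, hδ, hx⟩ := exists_eq_unit_mul_pow_four_of_sq_add_one_eq h
  rcases eq_one_or_neg_one_or_I_or_neg_I_of_isUnit hu with hreal | himag
  · refine ⟨1, δ, abs_one, hδ, ?_⟩
    rw [hx]
    rcases hreal with rfl | rfl
    · left; ring
    · right; ring
  · refine ⟨-1, star δ, by norm_num, (Zsqrtd.norm_conj δ).trans hδ, ?_⟩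
    have hconj : (⟨x, -1⟩ : GaussianInt) = ⟨1, -1⟩ * star u * star δ ^ 4 := by
      simpa using congrArg star hx
    rw [hconj]
    rcases himag with rfl | rfl
    · right
      rw [show (⟨1, -1⟩ * star ⟨0, 1⟩ : GaussianInt) = -⟨1, 1⟩ by decide, neg_mul]
    · left
      rw [show (⟨1, -1⟩ * star ⟨0, -1⟩ : GaussianInt) = ⟨1, 1⟩ by decide]

lemma exists_pow_four_eq_mul_of_sq_add_one_eq {x y : ℤ} (h : x ^ 2 + 1 = 2 * y ^ 4) :
    ∃ (s : ℤ) (z : GaussianInt) (c : ℝ), |s| = 1 ∧ 0 ≤ c ∧ 13 * |y| ≤ z.norm ∧ z.norm ≤ 26 * |y| ∧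
      (z : ℂ) ^ 4 = c * ((⟨x, s⟩ : GaussianInt) * (⟨239, 1⟩ : GaussianInt)) := by
  obtain ⟨s, δ, hs, hδ, hx⟩ := exists_eq_or_eq_neg_mul_pow_four_of_sq_add_one_eq h
  have hy := abs_nonneg y
  have hroot : (⟨239, 1⟩ : GaussianInt) = -(⟨1, -1⟩ * ⟨3, -2⟩ ^ 4) := by decide
  have htwo : (⟨1, 1⟩ * ⟨1, -1⟩ : GaussianInt) = 2 := by decide
  have hnorm : (⟨3, -2⟩ * δ : GaussianInt).norm = 13 * |y| := by
    rw [Zsqrtd.norm_mul, hδ]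
    rfl
  rcases hx with hx | hx
  · refine ⟨s, ⟨1, 1⟩ * (⟨3, -2⟩ * δ), 2, hs, by norm_num, ?_, ?_, ?_⟩
    · rw [Zsqrtd.norm_mul, hnorm, show (⟨1, 1⟩ : GaussianInt).norm = 2 from rfl]
      linarith
    · rw [Zsqrtd.norm_mul, hnorm, show (⟨1, 1⟩ : GaussianInt).norm = 2 from rfl]
      linarith
    · have hpow : (⟨1, 1⟩ ^ 4 : GaussianInt) = -4 := by decide
      have hz : (⟨1, 1⟩ * (⟨3, -2⟩ * δ)) ^ 4 = 2 * ((⟨x, s⟩ : GaussianInt) * ⟨239, 1⟩) := by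
        rw [hx, hroot]
        linear_combination (⟨3, -2⟩ * δ) ^ 4 * hpow + 2 * (⟨3, -2⟩ * δ) ^ 4 * htwo
      rw [← map_pow, hz, map_mul, map_mul, map_ofNat, Complex.ofReal_ofNat]
  · refine ⟨s, ⟨3, -2⟩ * δ, 1 / 2, hs, by norm_num, hnorm.ge, by linarith, ?_⟩
    have hz : 2 * (⟨3, -2⟩ * δ) ^ 4 = (⟨x, s⟩ : GaussianInt) * ⟨239, 1⟩ := by
      rw [hx, hroot]
      linear_combination -(⟨3, -2⟩ * δ) ^ 4 * htwo
    rw [← map_mul GaussianInt.toComplex ⟨x, s⟩, ← hz, map_mul _ 2, map_pow, map_ofNat]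
    push_cast
    ring

end GaussianInt

section Bound

lemma norm_sub_re_mul_le (z : ℂ) : (‖z‖ - z.re) * (2 * z.re) ≤ z.im ^ 2 := by
  have h := Complex.sq_norm z
  rw [Complex.normSq_apply] at h
  nlinarith [sq_nonneg (‖z‖ - z.re)]

lemma arg_toComplex_mk_one_mem {k : ℤ} (hk : 0 < k) :
    ((⟨k, 1⟩ : GaussianInt) : ℂ).arg ∈ Set.Icc (0 : ℝ) (1 / k) := by
  have h := abs_arg_le_abs_im_div_re (z := ((⟨k, 1⟩ : GaussianInt) : ℂ))
    (by rw [GaussianInt.re_toComplex]; exact_mod_cast hk)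
  rw [GaussianInt.re_toComplex, GaussianInt.im_toComplex, Int.cast_one, abs_one] at h
  refine ⟨Complex.arg_nonneg_iff.mpr ?_, (le_abs_self _).trans h⟩
  rw [GaussianInt.im_toComplex, Int.cast_one]
  exact zero_le_one

lemma norm_toComplex_mk_one_sub_mem {k : ℤ} (hk : 0 < k) :
    ‖((⟨k, 1⟩ : GaussianInt) : ℂ)‖ - k ∈ Set.Icc (0 : ℝ) (1 / (2 * k)) := by
  have hle := Complex.re_le_norm ((⟨k, 1⟩ : GaussianInt) : ℂ)
  have h := norm_sub_re_mul_le ((⟨k, 1⟩ : GaussianInt) : ℂ)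
  rw [GaussianInt.re_toComplex] at hle h
  rw [GaussianInt.im_toComplex, Int.cast_one, one_pow] at h
  exact ⟨sub_nonneg.mpr hle, (le_div_iff₀ (by positivity)).mpr h⟩

lemma one_le_of_im_mul_padeForm_ne_zero {γ : GaussianInt} {ε : ℝ}
    (hε : ‖(γ : ℂ) - ‖(γ : ℂ)‖ *
        Complex.exp (((⟨239, 1⟩ : GaussianInt) : ℂ).arg / 4 * Complex.I)‖ ≤ ε) {r : ℕ}
    (h : ((γ : ℂ) * padeForm (((1 : ℤ) / (4 : ℤ) : ℝ) : ℂ) r (⟨239, 1⟩ : GaussianInt)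
      (conj ((⟨239, 1⟩ : GaussianInt) : ℂ))).im ≠ 0) :
    1 ≤ ‖(γ : ℂ)‖ * ((8 / 239) ^ r / 956) + ε * 7649 ^ r := by
  have hε₀ : 0 ≤ ε := (norm_nonneg _).trans hε
  have hprime (p : ℕ) (hp : p.Prime) (hp₄ : (p : ℤ) ∣ 4) : (p : ℤ) ∣ 2 :=
    Int.Prime.dvd_pow' hp (show (p : ℤ) ∣ 2 ^ 2 by norm_num [hp₄])
  have hgap := one_le_norm_mul_pow_add_norm_sub_mul_pow (a := 1) (b := 4) (d := 2)
    one_pos (by norm_num) two_pos hprime zero_le_one h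
  obtain ⟨harg₀, harg⟩ := arg_toComplex_mk_one_mem (k := 239) (by norm_num)
  obtain ⟨hnorm₀, hnorm⟩ := norm_toComplex_mk_one_sub_mem (k := 239) (by norm_num)
  set u : ℂ := ((⟨239, 1⟩ : GaussianInt) : ℂ)
  have hexp : Complex.exp (((1 : ℤ) / (4 : ℤ) : ℝ) * u.arg * Complex.I) =
      Complex.exp (u.arg / 4 * Complex.I) := by
    congr 1
    push_cast
    ring
  rw [hexp] at hgap
  push_cast at hgap harg hnorm₀ hnorm
  -- The constants: `16 * (‖u‖ - 239) ≤ 8 / 239`, `u.arg / 4 ≤ 1 / 956` and `32 * ‖u‖ ≤ 7649`.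
  have hbase₀ : 0 ≤ 2 * 4 * 2 * (‖u‖ - 239) := by positivity
  refine hgap.trans (add_le_add ?_ ?_)
  · rw [mul_assoc]
    gcongr
    rw [div_eq_inv_mul _ (956 : ℝ)]
    gcongr <;> linarith
  · gcongr
    linarith

lemma exists_one_le_of_norm_sub_le {γ : GaussianInt} (hγ : γ ≠ 0) {ε : ℝ}
    (hε : ‖(γ : ℂ) - ‖(γ : ℂ)‖ *
        Complex.exp (((⟨239, 1⟩ : GaussianInt) : ℂ).arg / 4 * Complex.I)‖ ≤ ε) (n : ℕ) :
    ∃ r, n ≤ r ∧ r ≤ n + 1 ∧ 1 ≤ ‖(γ : ℂ)‖ * ((8 / 239) ^ r / 956) + ε * 7649 ^ r := by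
  have him : ((⟨239, 1⟩ : GaussianInt) : ℂ).im ≠ 0 := by
    rw [GaussianInt.im_toComplex, Int.cast_one]
    exact one_ne_zero
  rcases im_mul_padeForm_ne_zero_or (α := (1 : ℤ) / (4 : ℤ))
    (sq_ne_natCast_sq_of_pos_of_lt_one (by norm_num) (by norm_num))
    (GaussianInt.toComplex_eq_zero.not.mpr hγ) him n with h | h
  · exact ⟨n, le_rfl, n.le_succ, one_le_of_im_mul_padeForm_ne_zero hε h⟩
  · exact ⟨n + 1, n.le_succ, le_rfl, one_le_of_im_mul_padeForm_ne_zero hε h⟩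

lemma le_of_forall_exists_one_le {g : ℝ} (hg : 0 < g)
    (h : ∀ n : ℕ, ∃ r, n ≤ r ∧ r ≤ n + 1 ∧ 1 ≤ g * ((8 / 239) ^ r / 956) + 169 / g ^ 3 * 7649 ^ r) :
    g ≤ 478 * (239 / 8) ^ 5 := by
  -- With `r` just large enough for the first term to be at most `1 / 2`, the second one is at least
  -- `1 / 2`; for large `g` this fails because `(8 / 239) ^ 3 * 7649 < 1`.
  by_contra! hlarge
  obtain ⟨n, hn₁, hn₀⟩ := exists_nat_pow_near_of_lt_one (x := 478 / g) (y := (8 / 239 : ℝ))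
    (by positivity) ((div_le_one hg).mpr (by nlinarith)) (by norm_num) (by norm_num)
  rw [lt_div_iff₀ hg] at hn₁
  rw [div_le_iff₀ hg] at hn₀
  have hn : 5 ≤ n := by
    by_contra! hn
    have hpow : (8 / 239 : ℝ) ^ 5 ≤ (8 / 239) ^ (n + 1) :=
      pow_le_pow_of_le_one (by norm_num) (by norm_num) hn
    nlinarith
  obtain ⟨r, hr₀, hr₁, hr⟩ := h (n + 1)
  have hmain : g * ((8 / 239) ^ r / 956) ≤ 1 / 2 := by
    have hpow : (8 / 239 : ℝ) ^ r ≤ (8 / 239) ^ (n + 1) :=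
      pow_le_pow_of_le_one (by norm_num) (by norm_num) hr₀
    nlinarith
  have hg₃ : g ^ 3 ≤ 338 * 7649 ^ (n + 2) := by
    have herr : 1 / 2 ≤ 169 / g ^ 3 * 7649 ^ r := by linarith
    have hpow : (7649 : ℝ) ^ r ≤ 7649 ^ (n + 2) := pow_le_pow_right₀ (by norm_num) hr₁
    rw [div_mul_eq_mul_div, le_div_iff₀ (by positivity)] at herr
    linarith
  have hcontra : (478 : ℝ) ^ 3 < 478 ^ 3 :=
    calc (478 : ℝ) ^ 3 ≤ ((8 / 239) ^ n * g) ^ 3 := by gcongr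
      _ = ((8 / 239) ^ 3) ^ n * g ^ 3 := by rw [mul_pow, pow_right_comm]
      _ ≤ ((8 / 239) ^ 3) ^ n * (338 * 7649 ^ (n + 2)) := by gcongr
      _ = 338 * 7649 ^ 2 * ((8 / 239) ^ 3 * 7649) ^ n := by rw [mul_pow _ (7649 : ℝ)]; ring
      _ ≤ 338 * 7649 ^ 2 * ((8 / 239) ^ 3 * 7649) ^ 5 := by
          gcongr ?_ * ?_
          exact pow_le_pow_of_le_one (by norm_num) (by norm_num) hn
      _ < 478 ^ 3 := by norm_num
  exact lt_irrefl _ hcontra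

lemma lt_of_sq_add_one_eq_two_mul_pow_four {x y : ℤ} (hx : 0 < x) (hy : 0 < y)
    (h : x ^ 2 + 1 = 2 * y ^ 4) : y < 2 * 10 ^ 19 := by
  obtain ⟨s, z, c, hs, hc, hz₀, hz₁, hz⟩ := exists_pow_four_eq_mul_of_sq_add_one_eq h
  obtain ⟨γ, hγz, hγ⟩ := exists_norm_sub_le_of_pow_four_eq hc hz
  rw [abs_of_pos hy] at hz₀ hz₁
  set g := ‖(γ : ℂ)‖ with hgdef
  have hg : g ^ 2 = z.norm := by
    rw [hγz, GaussianInt.intCast_real_norm, Complex.sq_norm]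
  have hy' : (0 : ℝ) < y := mod_cast hy
  have hg₀ : 13 * (y : ℝ) ≤ g ^ 2 := by rw [hg]; exact_mod_cast hz₀
  have hg₁ : g ^ 2 ≤ 26 * (y : ℝ) := by rw [hg]; exact_mod_cast hz₁
  have hgpos : 0 < g := by
    refine lt_of_pow_lt_pow_left₀ 2 (norm_nonneg _) ?_
    linarith
  have hyx : y ^ 2 ≤ x := by nlinarith
  have hε : g * (|((⟨x, s⟩ : GaussianInt) : ℂ).arg| / 4) ≤ 169 / g ^ 3 := by
    have harg := abs_arg_le_abs_im_div_re (z := ((⟨x, s⟩ : GaussianInt) : ℂ))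
      (by rw [GaussianInt.re_toComplex]; exact_mod_cast hx)
    rw [GaussianInt.re_toComplex, GaussianInt.im_toComplex, ← Int.cast_abs, hs, Int.cast_one]
      at harg
    have hyx' : (y : ℝ) ^ 2 ≤ x := mod_cast hyx
    calc g * (|((⟨x, s⟩ : GaussianInt) : ℂ).arg| / 4) ≤ g * (1 / (y : ℝ) ^ 2 / 4) := by
          gcongr
          exact harg.trans (by gcongr)
      _ ≤ g * (676 / g ^ 4 / 4) := by
          gcongr g * (?_ / 4)
          rw [div_le_div_iff₀ (by positivity) (by positivity)]
          nlinarith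
      _ = 169 / g ^ 3 := by
          field_simp
          norm_num
  have hγ₀ : γ ≠ 0 := by
    rintro rfl
    simp [hgdef] at hgpos
  have hgle := le_of_forall_exists_one_le hgpos (exists_one_le_of_norm_sub_le hγ₀ (hγ.trans hε))
  have hy_lt : (y : ℝ) < 2 * 10 ^ 19 :=
    calc (y : ℝ) ≤ g ^ 2 / 13 := by linarith
      _ ≤ (478 * (239 / 8) ^ 5) ^ 2 / 13 := by gcongr
      _ < 2 * 10 ^ 19 := by norm_num
  exact_mod_cast hy_lt

end Bound

section Pell

/-- The pairs `(xₙ, tₙ)` of the sequences in the theorem, with values in `ℕ` so that the first few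
terms can be computed. -/
def pellPair : ℕ → ℕ × ℕ
  | 0 => (1, 1)
  | n + 1 => (3 * (pellPair n).1 + 4 * (pellPair n).2, 2 * (pellPair n).1 + 3 * (pellPair n).2)

lemma pellPair_fst_sq_add_one (n : ℕ) : (pellPair n).1 ^ 2 + 1 = 2 * (pellPair n).2 ^ 2 := by
  induction n with
  | zero => rfl
  | succ n ih => simp only [pellPair]; linarith

lemma pellPair_snd_le_fst (n : ℕ) : (pellPair n).2 ≤ (pellPair n).1 := by
  cases n with
  | zero => rfl
  | succ n => simp only [pellPair]; lia

lemma five_pow_le_pellPair_snd (n : ℕ) : 5 ^ n ≤ (pellPair n).2 := by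
  induction n with
  | zero => rfl
  | succ n ih =>
    have hle := pellPair_snd_le_fst n
    simp only [pellPair, pow_succ]
    lia

lemma lt_of_pellPair_snd_eq_sq {n m : ℕ} (h : (pellPair n).2 = m ^ 2) : n < 56 := by
  have hpow := five_pow_le_pellPair_snd n
  have hfst : 0 < (pellPair n).1 :=
    (pow_pos (by norm_num) n).trans_le (hpow.trans (pellPair_snd_le_fst n))
  have hm : 0 < m := by
    by_contra! hm
    obtain rfl := Nat.le_zero.mp hm
    rw [h] at hpow
    exact absurd hpow (by simp)
  have hquartic : (pellPair n).1 ^ 2 + 1 = 2 * m ^ 4 := by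
    rw [pellPair_fst_sq_add_one, h]; ring
  have hm_lt : m < 2 * 10 ^ 19 := by
    exact_mod_cast lt_of_sq_add_one_eq_two_mul_pow_four (x := (pellPair n).1) (y := m)
      (mod_cast hfst) (mod_cast hm) (mod_cast hquartic)
  refine (Nat.pow_lt_pow_iff_right (by norm_num : 1 < 5)).mp ?_
  calc 5 ^ n ≤ m ^ 2 := h ▸ hpow
    _ < (2 * 10 ^ 19) ^ 2 := by gcongr
    _ < 5 ^ 56 := by norm_num

set_option maxRecDepth 4000 in
lemma eq_zero_or_eq_three_of_pellPair_snd_eq_sq {n m : ℕ} (h : (pellPair n).2 = m ^ 2) :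
    n = 0 ∨ n = 3 := by
  have hn := lt_of_pellPair_snd_eq_sq h
  have hsq : IsSquare (pellPair n).2 := h ▸ IsSquare.sq m
  contrapose! hsq
  interval_cases n <;> norm_num at hsq
  all_goals norm_num [pellPair]

lemma eq_pellPair_of_recurrence {x t : ℕ → ℤ} (hx₀ : x 0 = 1) (ht₀ : t 0 = 1)
    (hx : ∀ n, x (n + 1) = 3 * x n + 4 * t n) (ht : ∀ n, t (n + 1) = 2 * x n + 3 * t n) (n : ℕ) :
    x n = (pellPair n).1 ∧ t n = (pellPair n).2 := by
  induction n with
  | zero => exact ⟨hx₀, ht₀⟩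
  | succ n ih =>
    rw [hx, ht, ih.1, ih.2]
    exact ⟨by simp [pellPair], by simp [pellPair]⟩

end Pell

theorem stmt_6 (x t : ℕ → ℤ) (hx0 : x 0 = 1) (ht0 : t 0 = 1)
    (hx : ∀ n, x (n + 1) = 3 * x n + 4 * t n)
    (ht : ∀ n, t (n + 1) = 2 * x n + 3 * t n) :
    ∀ n : ℕ, (∃ m : ℤ, t n = m ^ 2) ↔ (n = 0 ∨ n = 3) := by
  have hpell (n : ℕ) : t n = (pellPair n).2 := (eq_pellPair_of_recurrence hx0 ht0 hx ht n).2
  intro n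
  constructor
  · rintro ⟨m, hm⟩
    refine eq_zero_or_eq_three_of_pellPair_snd_eq_sq (m := m.natAbs) ?_
    rw [hpell] at hm
    zify
    rw [hm, sq_abs]
  · rintro (rfl | rfl)
    · exact ⟨1, hpell 0⟩
    · exact ⟨13, hpell 3⟩
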